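/- (Theorem 2, (i) ⇒ (ii)) Under the standing assumptions on the global optimization problem, if the problem is solvable — i.e., there exists x̃ ∈ 𝒳 such that F_i(x) ≥ F_i(x̃) for every x ∈ 𝒳 and every i — then equation (7) holds: ∑_{j∈J} (k_j : EReal) * x*_j(A,b) = (c : EReal). -/

import Mathlib

open scoped BigOperators

noncomputable section

/-- Max-plus product: `(A ⊗ x)_i = ⨆_j (A i j + x_j)` in `EReal`. -/
def maxPlus {m n : ℕ} (A : Matrix (Fin m) (Fin n) EReal) (x : Fin n → EReal)
    (i : Fin m) : EReal :=
  ⨆ j, A i j + x j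

/-- Auxiliary subtraction: `s(b,a) = +∞` if `a = -∞`, else `b - a`. -/
def sSub (b a : EReal) : EReal := if a = ⊥ then ⊤ else b - a

/-- Greatest subsolution `x*(A,b)_j = ⨅_i s(b_i, A i j)`. -/
def xstar {m n : ℕ} (A : Matrix (Fin m) (Fin n) EReal) (b : Fin m → EReal)
    (j : Fin n) : EReal :=
  ⨅ i, sSub (b i) (A i j)

/-- Objective function `F(x)_i = ⨆_j (A i j + x_j)` for real vectors `x`. -/
def objF {m n : ℕ} (A : Matrix (Fin m) (Fin n) EReal) (x : Fin n → ℝ)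
    (i : Fin m) : EReal :=
  ⨆ j, A i j + (x j : EReal)

/-- `J = {j | k_j > 0}` as a finite set. -/
def Jset {n : ℕ} (k : Fin n → ℝ) : Finset (Fin n) :=
  Finset.univ.filter (fun j => 0 < k j)

/-- Greatest lower bound `b_i = ((∑_{j ∈ J} k_j * A i j) + c) / (∑_{j ∈ J} k_j)`. -/
def glb {m n : ℕ} (A : Matrix (Fin m) (Fin n) EReal) (k : Fin n → ℝ) (c : ℝ)
    (i : Fin m) : EReal :=
  ((∑ j ∈ Jset k, (k j : EReal) * A i j) + (c : EReal)) /
    ((∑ j ∈ Jset k, k j : ℝ) : EReal)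

/-- `xt` is a globally optimal solution of the problem `(A, k, c)`. -/
def IsOptimal {m n : ℕ} (A : Matrix (Fin m) (Fin n) EReal) (k : Fin n → ℝ)
    (c : ℝ) (xt : Fin n → ℝ) : Prop :=
  (∑ j, k j * xt j = c) ∧
    ∀ x : Fin n → ℝ, (∑ j, k j * x j = c) → ∀ i, objF A xt i ≤ objF A x i

/-!
If `k j₀ > 0` and the term `A i j₀ + x̃ j₀` lay strictly below `F_i(x̃)`, raising coordinate `j₀`
a little and lowering all coordinates uniformly so as to stay in the constraint set would decrease
`F_i`. Hence at an optimum `x̃` every term with index in `J` attains the maximum `F_i(x̃)`.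
Averaging these equalities over `J` with weights `k` identifies `b_i` with `F_i(x̃)`, so that
`b_i - A i j` is `x̃ j` for `j ∈ J` (unless `A i j = -∞`, when row `i` puts no constraint on `x*`).
Thus `x*(A, b)` agrees with `x̃` on `J`, and (7) is the constraint satisfied by `x̃`.
-/

section Sums

variable {ι : Type*} {s : Finset ι}

lemma ereal_coe_sum (f : ι → ℝ) : ((∑ j ∈ s, f j : ℝ) : EReal) = ∑ j ∈ s, (f j : EReal) :=
  map_sum (⟨⟨Real.toEReal, EReal.coe_zero⟩, EReal.coe_add⟩ : ℝ →+ EReal) f s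

lemma ereal_coe_sum_mul_of_nonneg {k : ι → ℝ} (hk : ∀ j ∈ s, 0 ≤ k j) (a : EReal) :
    ((∑ j ∈ s, k j : ℝ) : EReal) * a = ∑ j ∈ s, (k j : EReal) * a := by
  induction s using Finset.cons_induction with
  | empty => simp
  | cons j s hj ih =>
    rw [Finset.forall_mem_cons] at hk
    rw [Finset.sum_cons, Finset.sum_cons, ← ih hk.2, EReal.coe_add,
      EReal.right_distrib_of_nonneg (EReal.coe_nonneg.2 hk.1)
        (EReal.coe_nonneg.2 (Finset.sum_nonneg hk.2))]

lemma ereal_sum_mul_add_coe_of_nonneg {k : ι → ℝ} (hk : ∀ j ∈ s, 0 ≤ k j) (a : ι → EReal)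
    (x : ι → ℝ) :
    ∑ j ∈ s, (k j : EReal) * (a j + x j) =
      ∑ j ∈ s, (k j : EReal) * a j + ((∑ j ∈ s, k j * x j : ℝ) : EReal) := by
  rw [ereal_coe_sum, ← Finset.sum_add_distrib]
  refine Finset.sum_congr rfl fun j hj => ?_
  rw [EReal.left_distrib_of_nonneg_of_ne_top (EReal.coe_nonneg.2 (hk j hj)) (EReal.coe_ne_top _),
    EReal.coe_mul]

end Sums

section Perturbation

lemma exists_pos_add_coe_lt {a b : EReal} (h : a < b) : ∃ r : ℝ, 0 < r ∧ a + r < b := by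
  induction a with
  | bot => exact ⟨1, one_pos, by simpa using h⟩
  | top => exact absurd h not_top_lt
  | coe a =>
    obtain ⟨d, had, hdb⟩ := EReal.lt_iff_exists_real_btwn.1 h
    rw [EReal.coe_lt_coe_iff] at had
    exact ⟨d - a, sub_pos.2 had, by rwa [← EReal.coe_add, add_sub_cancel]⟩

lemma add_coe_lt_of_le_of_neg {a b : EReal} {r : ℝ} (hab : a ≤ b) (hbot : b ≠ ⊥) (htop : b ≠ ⊤)
    (hr : r < 0) : a + r < b := by
  lift b to ℝ using ⟨htop, hbot⟩
  calc a + r ≤ b + r := by gcongr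
    _ < b := by exact_mod_cast add_lt_of_neg_right b hr

lemma exists_sum_mul_eq_zero_and_iSup_add_lt {ι : Type*} [Fintype ι] {k : ι → ℝ}
    (hk : 0 < ∑ j, k j) {f : ι → EReal} (htop : ∀ j, f j ≠ ⊤) {j₀ : ι} (hj₀ : 0 < k j₀)
    (hlt : f j₀ < ⨆ j, f j) :
    ∃ t : ι → ℝ, ∑ j, k j * t j = 0 ∧ ⨆ j, (f j + t j) < ⨆ j, f j := by
  classical
  have : Nonempty ι := ⟨j₀⟩
  have hsup_top : ⨆ j, f j ≠ ⊤ := by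
    obtain ⟨j, hj⟩ := exists_eq_ciSup_of_finite (f := f)
    exact hj ▸ htop j
  obtain ⟨r, hr, hraise⟩ := exists_pos_add_coe_lt hlt
  obtain ⟨e, he_pos, he⟩ : ∃ e : ℝ, 0 < e ∧ (∑ j, k j) * e = k j₀ * r :=
    ⟨k j₀ * r / ∑ j, k j, by positivity, mul_div_cancel₀ _ hk.ne'⟩
  set t : ι → ℝ := fun j => (if j = j₀ then r else 0) - e with ht
  refine ⟨t, by simp [ht, mul_sub, ← Finset.sum_mul, he], ?_⟩
  obtain ⟨j, hj⟩ := exists_eq_ciSup_of_finite (f := fun j => f j + (t j : EReal))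
  rw [← hj]
  obtain rfl | hne := eq_or_ne j j₀
  · have htj : t j ≤ r := by simp [ht, he_pos.le]
    calc f j + t j ≤ f j + r := by gcongr
      _ < ⨆ j, f j := hraise
  · have htj : t j < 0 := by simp [ht, hne, he_pos]
    exact add_coe_lt_of_le_of_neg (le_iSup f j) hlt.ne_bot hsup_top htj

end Perturbation

section MaxPlus

variable {m n : ℕ} {A : Matrix (Fin m) (Fin n) EReal} {k : Fin n → ℝ} {c : ℝ}

lemma mem_Jset {j : Fin n} : j ∈ Jset k ↔ 0 < k j := by
  simp [Jset]

lemma sum_Jset_mul_of_nonneg (hk : ∀ j, 0 ≤ k j) (x : Fin n → ℝ) :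
    ∑ j ∈ Jset k, k j * x j = ∑ j, k j * x j := by
  refine Finset.sum_filter_of_ne fun j _ hj => ?_
  exact (hk j).lt_of_ne' (left_ne_zero_of_mul hj)

lemma objF_ne_bot {x : Fin n → ℝ} {i : Fin m} (h : ∃ j, A i j ≠ ⊥) : objF A x i ≠ ⊥ := by
  obtain ⟨j, hj⟩ := h
  refine ne_bot_of_le_ne_bot ?_ (le_iSup (fun j => A i j + (x j : EReal)) j)
  simp [EReal.add_eq_bot_iff, hj]

lemma IsOptimal.add_eq_objF {xt : Fin n → ℝ} (hopt : IsOptimal A k c xt) (hk : 0 < ∑ j, k j)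
    {i : Fin m} (hA : ∀ j, A i j ≠ ⊤) {j : Fin n} (hj : 0 < k j) :
    A i j + xt j = objF A xt i := by
  refine (le_iSup (fun j => A i j + (xt j : EReal)) j).eq_of_not_lt fun hlt => ?_
  obtain ⟨t, ht_sum, ht_lt⟩ := exists_sum_mul_eq_zero_and_iSup_add_lt hk
    (fun j => EReal.add_ne_top (hA j) (EReal.coe_ne_top (xt j))) hj hlt
  have hfeas : ∑ j, k j * (xt + t) j = c := by
    simp [mul_add, Finset.sum_add_distrib, hopt.1, ht_sum]
  refine (hopt.2 (xt + t) hfeas i).not_gt ?_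
  simpa only [objF, Pi.add_apply, EReal.coe_add, ← add_assoc] using ht_lt

lemma glb_eq_of_forall_add_eq {x : Fin n → ℝ} {i : Fin m} {M : EReal}
    (hJ : (Jset k).Nonempty) (hx : ∑ j ∈ Jset k, k j * x j = c)
    (h : ∀ j ∈ Jset k, A i j + x j = M) : glb A k c i = M := by
  have hk : ∀ j ∈ Jset k, 0 ≤ k j := fun j hj => (mem_Jset.1 hj).le
  have hsum : 0 < ∑ j ∈ Jset k, k j := Finset.sum_pos (fun j hj => mem_Jset.1 hj) hJ
  have hnum : ∑ j ∈ Jset k, (k j : EReal) * A i j + c = ((∑ j ∈ Jset k, k j : ℝ) : EReal) * M :=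
    calc ∑ j ∈ Jset k, (k j : EReal) * A i j + c
        = ∑ j ∈ Jset k, (k j : EReal) * (A i j + x j) := by
          rw [ereal_sum_mul_add_coe_of_nonneg hk, hx]
      _ = ∑ j ∈ Jset k, (k j : EReal) * M :=
          Finset.sum_congr rfl fun j hj => by rw [h j hj]
      _ = ((∑ j ∈ Jset k, k j : ℝ) : EReal) * M := (ereal_coe_sum_mul_of_nonneg hk M).symm
  rw [glb, hnum, ← EReal.mul_div,
    EReal.mul_div_cancel (EReal.coe_ne_bot _) (EReal.coe_ne_top _) (EReal.coe_ne_zero.2 hsum.ne')]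

lemma sSub_add_coe {a : EReal} (hbot : a ≠ ⊥) (htop : a ≠ ⊤) (x : ℝ) : sSub (a + x) a = x := by
  lift a to ℝ using ⟨htop, hbot⟩
  rw [sSub, if_neg hbot, EReal.add_sub_cancel_left]

lemma coe_le_sSub_add_coe {a : EReal} (htop : a ≠ ⊤) (x : ℝ) : x ≤ sSub (a + x) a := by
  obtain rfl | hbot := eq_or_ne a ⊥
  · simp [sSub]
  · exact (sSub_add_coe hbot htop x).ge

lemma xstar_eq_of_forall_add_eq {b : Fin m → EReal} {j : Fin n} {x : ℝ}
    (htop : ∀ i, A i j ≠ ⊤) (hbot : ∃ i, A i j ≠ ⊥) (h : ∀ i, A i j + x = b i) :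
    xstar A b j = x := by
  simp only [xstar, ← h]
  obtain ⟨i, hi⟩ := hbot
  exact le_antisymm (iInf_le_of_le i (sSub_add_coe hi (htop i) x).le)
    (le_iInf fun i => coe_le_sSub_add_coe (htop i) x)

end MaxPlus

theorem stmt_9 {m n : ℕ} (hm : 1 ≤ m) (hn : 1 ≤ n)
    (A : Matrix (Fin m) (Fin n) EReal) (hA : ∀ i j, A i j ≠ ⊤)
    (k : Fin n → ℝ) (hk : ∀ j, 0 ≤ k j) (hk0 : ∃ j, k j ≠ 0) (c : ℝ)
    (hrow : ∀ i, ∃ j, A i j ≠ ⊥)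
    (hcol : ∀ j, (∀ i, A i j = ⊥) → 0 < k j)
    (hsolv : ∃ xt : Fin n → ℝ, IsOptimal A k c xt) :
    ∑ j ∈ Jset k, (k j : EReal) * xstar A (glb A k c) j = (c : EReal) := by
  obtain ⟨xt, hopt⟩ := hsolv
  obtain ⟨j₁, hj₁⟩ : ∃ j, 0 < k j := hk0.imp fun j hj => (hk j).lt_of_ne' hj
  have hsum : 0 < ∑ j, k j := Finset.sum_pos' (fun j _ => hk j) ⟨j₁, Finset.mem_univ j₁, hj₁⟩
  have hJxt : ∑ j ∈ Jset k, k j * xt j = c := (sum_Jset_mul_of_nonneg hk xt).trans hopt.1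
  have htight : ∀ i, ∀ j ∈ Jset k, A i j + xt j = objF A xt i := fun i j hj =>
    hopt.add_eq_objF hsum (hA i) (mem_Jset.1 hj)
  have hglb : ∀ i, glb A k c i = objF A xt i := fun i =>
    glb_eq_of_forall_add_eq ⟨j₁, mem_Jset.2 hj₁⟩ hJxt (htight i)
  have hxstar : ∀ j ∈ Jset k, xstar A (glb A k c) j = xt j := by
    intro j hj
    refine xstar_eq_of_forall_add_eq (hA · j) ⟨⟨0, hm⟩, fun hbot => ?_⟩
      fun i => (htight i j hj).trans (hglb i).symm
    exact objF_ne_bot (x := xt) (hrow ⟨0, hm⟩) (by rw [← htight _ j hj, hbot, EReal.bot_add])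
  calc ∑ j ∈ Jset k, (k j : EReal) * xstar A (glb A k c) j
      = ∑ j ∈ Jset k, ((k j * xt j : ℝ) : EReal) :=
        Finset.sum_congr rfl fun j hj => by rw [hxstar j hj, EReal.coe_mul]
    _ = c := by rw [← ereal_coe_sum, hJxt]
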